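/- arXiv:2310.14440 — 7 statements merged into one kernel-verified Lean document; each statement's English description precedes it below -/
import Mathlib

section
/- Let a, d : ℝ → ℝ be differentiable with a(t) ≠ 0 for all t, let b, c : ℝ → ℝ, and let μ : ℝ → ℝ be twice differentiable with μ(t) ≠ 0 for all t. Define α(t) = μ'(t)/(4a(t)μ(t)) − d(t)/(2a(t)). Then α satisfies the Riccati equation α' + b + 2cα + 4aα² = 0 on ℝ if and only if μ satisfies the characteristic equation μ'' − η·μ' + 4σ·μ = 0 on ℝ, where η(t) = a'(t)/a(t) − 2c(t) + 4d(t) and σ(t) = a(t)b(t) − c(t)d(t) + d(t)² + d(t)a'(t)/(2a(t)) − d'(t)/2. -/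
/-- Substitution lemma: the Riccati equation for α is equivalent to the
second-order linear characteristic equation for μ. -/
theorem stmt_1
    (a d : ℝ → ℝ) (ha : Differentiable ℝ a) (hd : Differentiable ℝ d)
    (hane : ∀ t, a t ≠ 0)
    (b c : ℝ → ℝ)
    (μ : ℝ → ℝ) (hμ : Differentiable ℝ μ) (hμ' : Differentiable ℝ (deriv μ))
    (hμne : ∀ t, μ t ≠ 0)
    (α : ℝ → ℝ)
    (hα : ∀ t, α t = deriv μ t / (4 * a t * μ t) - d t / (2 * a t))
    (η σ : ℝ → ℝ)
    (hη : ∀ t, η t = deriv a t / a t - 2 * c t + 4 * d t)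
    (hσ : ∀ t, σ t = a t * b t - c t * d t + d t ^ 2
        + d t * deriv a t / (2 * a t) - deriv d t / 2) :
    (∀ t, deriv α t + b t + 2 * c t * α t + 4 * a t * α t ^ 2 = 0) ↔
      (∀ t, deriv (deriv μ) t - η t * deriv μ t + 4 * σ t * μ t = 0) := by
  have key : ∀ t, deriv (deriv μ) t - η t * deriv μ t + 4 * σ t * μ t
      = 4 * a t * μ t * (deriv α t + b t + 2 * c t * α t + 4 * a t * α t ^ 2) := by
    intro t
    have h1 := hane t
    have h2 := hμne t
    have hA := (ha t).hasDerivAt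
    have hD := (hd t).hasDerivAt
    have hM := (hμ t).hasDerivAt
    have hM' := (hμ' t).hasDerivAt
    have hden : 4 * a t * μ t ≠ 0 := mul_ne_zero (mul_ne_zero (by norm_num) h1) h2
    have hden2 : 2 * a t ≠ 0 := mul_ne_zero (by norm_num) h1
    have hder : HasDerivAt α
        ((deriv (deriv μ) t * (4 * a t * μ t)
          - deriv μ t * (4 * deriv a t * μ t + 4 * a t * deriv μ t)) / (4 * a t * μ t) ^ 2
          - (deriv d t * (2 * a t) - d t * (2 * deriv a t)) / (2 * a t) ^ 2) t := by
      rw [funext hα]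
      exact (hM'.div ((hA.const_mul 4).mul hM) hden).sub (hD.div (hA.const_mul 2) hden2)
    rw [hder.deriv, hα, hη, hσ]
    field_simp
    ring
  constructor
  · intro h t
    rw [key, h, mul_zero]
  · intro h t
    have h3 := key t
    rw [h t] at h3
    exact (mul_eq_zero.mp h3.symm).resolve_left
      (mul_ne_zero (mul_ne_zero (by norm_num) (hane t)) (hμne t))
end

section
/- Let n ≥ 1, let a : ℝ → ℝ be differentiable with a(t) ≠ 0 for all t, let b : ℝ → ℝ, and let μ : ℝ → ℝ be twice differentiable with μ(t) ≠ 0 for all t. Define α(t) = μ'(t)/(4n·a(t)·μ(t)). Then α satisfies α' + b + 4aα² = 0 on ℝ if and only if μ satisfies μ'' − (a'/a)·μ' + 4n·a·b·μ + ((1 − n)/n)·(μ')²/μ = 0 on ℝ. -/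
/-- Substitution lemma of Theorem 3: equivalence between the n-dimensional Riccati
equation for α and the quasilinear characteristic equation for μ. -/
theorem stmt_7
    (n : ℕ) (hn : 1 ≤ n)
    (a : ℝ → ℝ) (ha : Differentiable ℝ a) (hane : ∀ t, a t ≠ 0)
    (b : ℝ → ℝ)
    (μ : ℝ → ℝ) (hμ : Differentiable ℝ μ) (hμ' : Differentiable ℝ (deriv μ))
    (hμne : ∀ t, μ t ≠ 0)
    (α : ℝ → ℝ)
    (hα : ∀ t, α t = deriv μ t / (4 * n * a t * μ t)) :
    (∀ t, deriv α t + b t + 4 * a t * α t ^ 2 = 0) ↔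
      (∀ t, deriv (deriv μ) t - (deriv a t / a t) * deriv μ t + 4 * n * a t * b t * μ t
          + ((1 - (n : ℝ)) / n) * (deriv μ t) ^ 2 / μ t = 0) := by
  have hn0 : (n : ℝ) ≠ 0 := by
    have : n ≠ 0 := by omega
    exact_mod_cast this
  refine forall_congr' fun t => ?_
  have h1 := hane t
  have h2 := hμne t
  have hD : 4 * (n : ℝ) * a t * μ t ≠ 0 := by simp [hn0, h1, h2]
  have hden : HasDerivAt (fun s => 4 * (n : ℝ) * a s * μ s)
      (4 * (n : ℝ) * deriv a t * μ t + 4 * (n : ℝ) * a t * deriv μ t) t :=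
    ((ha t).hasDerivAt.const_mul (4 * (n : ℝ))).mul (hμ t).hasDerivAt
  have hfun : α = fun s => deriv μ s / (4 * (n : ℝ) * a s * μ s) := funext hα
  have hd : deriv α t = (deriv (deriv μ) t * (4 * (n : ℝ) * a t * μ t) - deriv μ t *
      (4 * (n : ℝ) * deriv a t * μ t + 4 * (n : ℝ) * a t * deriv μ t)) /
      (4 * (n : ℝ) * a t * μ t) ^ 2 := by
    rw [hfun]
    exact ((hμ' t).hasDerivAt.div hden hD).deriv
  have key : deriv (deriv μ) t - (deriv a t / a t) * deriv μ t + 4 * n * a t * b t * μ t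
      + ((1 - (n : ℝ)) / n) * (deriv μ t) ^ 2 / μ t
      = (4 * (n : ℝ) * a t * μ t) * (deriv α t + b t + 4 * a t * α t ^ 2) := by
    rw [hd, hα t]
    field_simp
    ring
  rw [key, mul_eq_zero, or_iff_right hD]
end

section
/- Let I ⊆ ℝ be an open interval, let a, b, c : ℝ → ℝ, and let α₀, β₀, γ₀ : ℝ → ℝ be differentiable on I satisfying, for all t ∈ I: α₀' + b + 2cα₀ + 4aα₀² = 0, β₀' + (c + 4aα₀)β₀ = 0, and γ₀' + a·β₀² = 0. Let c₀, B₀, G₀ ∈ ℝ be constants with c₀ + γ₀(t) ≠ 0 for all t ∈ I. Then the functions α := α₀ − β₀²/(4(c₀ + γ₀)), β := −B₀·β₀/(2(c₀ + γ₀)), and γ := G₀ − B₀²/(4(c₀ + γ₀)) satisfy, for all t ∈ I: α' + b + 2cα + 4aα² = 0, β' + (c + 4aα)β = 0, and γ' + a·β² = 0. -/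
/-- Nonlinear superposition principle for the homogeneous part of the Riccati system. -/
theorem stmt_9
    (I : Set ℝ) (hIopen : IsOpen I) (hIconn : I.OrdConnected)
    (a b c : ℝ → ℝ) (α₀ β₀ γ₀ : ℝ → ℝ)
    (hα₀ : ∀ t ∈ I, DifferentiableAt ℝ α₀ t)
    (hβ₀ : ∀ t ∈ I, DifferentiableAt ℝ β₀ t)
    (hγ₀ : ∀ t ∈ I, DifferentiableAt ℝ γ₀ t)
    (e1 : ∀ t ∈ I, deriv α₀ t + b t + 2 * c t * α₀ t + 4 * a t * α₀ t ^ 2 = 0)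
    (e2 : ∀ t ∈ I, deriv β₀ t + (c t + 4 * a t * α₀ t) * β₀ t = 0)
    (e3 : ∀ t ∈ I, deriv γ₀ t + a t * β₀ t ^ 2 = 0)
    (c₀ B₀ G₀ : ℝ) (hne : ∀ t ∈ I, c₀ + γ₀ t ≠ 0)
    (α β γ : ℝ → ℝ)
    (hα : ∀ t, α t = α₀ t - β₀ t ^ 2 / (4 * (c₀ + γ₀ t)))
    (hβ : ∀ t, β t = -(B₀ * β₀ t) / (2 * (c₀ + γ₀ t)))
    (hγ : ∀ t, γ t = G₀ - B₀ ^ 2 / (4 * (c₀ + γ₀ t))) :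
    ∀ t ∈ I,
      deriv α t + b t + 2 * c t * α t + 4 * a t * α t ^ 2 = 0 ∧
      deriv β t + (c t + 4 * a t * α t) * β t = 0 ∧
      deriv γ t + a t * β t ^ 2 = 0 := by
  intro t ht
  have hD := hne t ht
  have dα := (hα₀ t ht).hasDerivAt
  have dβ := (hβ₀ t ht).hasDerivAt
  have dγ := (hγ₀ t ht).hasDerivAt
  have h1 : deriv α₀ t = -(b t + 2 * c t * α₀ t + 4 * a t * α₀ t ^ 2) := by
    linarith [e1 t ht]
  have h2 : deriv β₀ t = -((c t + 4 * a t * α₀ t) * β₀ t) := by linarith [e2 t ht]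
  have h3 : deriv γ₀ t = -(a t * β₀ t ^ 2) := by linarith [e3 t ht]
  rw [h1] at dα
  rw [h2] at dβ
  rw [h3] at dγ
  have dD := dγ.const_add c₀
  have h4 : 4 * (c₀ + γ₀ t) ≠ 0 := mul_ne_zero (by norm_num) hD
  have h5 : 2 * (c₀ + γ₀ t) ≠ 0 := mul_ne_zero (by norm_num) hD
  have fα := dα.fun_sub ((dβ.fun_pow 2).fun_div (dD.const_mul 4) h4)
  have fβ := ((dβ.const_mul B₀).fun_neg).fun_div (dD.const_mul 2) h5
  have fγ := ((hasDerivAt_const t (B₀ ^ 2)).fun_div (dD.const_mul 4) h4).const_sub G₀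
  rw [← funext hα] at fα
  rw [← funext hβ] at fβ
  rw [← funext hγ] at fγ
  rw [fα.deriv, fβ.deriv, fγ.deriv, hα t, hβ t]
  refine ⟨?_, ?_, ?_⟩
  · field_simp
    push_cast
    ring
  · field_simp
    ring
  · field_simp
    ring
end

section
/- Let I ⊆ ℝ be an open interval, let a, b, c, f, g : ℝ → ℝ, and let α₀, β₀, γ₀, δ₀, ε₀, κ₀ : ℝ → ℝ be differentiable on I satisfying, for all t ∈ I: α₀' + b + 2cα₀ + 4aα₀² = 0, β₀' + (c + 4aα₀)β₀ = 0, γ₀' + a·β₀² = 0, δ₀' + (c + 4aα₀)δ₀ = f + 2α₀g, ε₀' = (g − 2aδ₀)β₀, and κ₀' = gδ₀ − aδ₀². Let c₀, B₀, D₀, E₀, K₀ ∈ ℝ be constants with c₀ + γ₀(t) ≠ 0 for all t ∈ I, and set α := α₀ − β₀²/(4(c₀ + γ₀)) and β := −B₀·β₀/(2(c₀ + γ₀)). Then the functions δ := δ₀ − β₀·(D₀ + ε₀)/(2(c₀ + γ₀)), ε := E₀ − B₀·(D₀ + ε₀)/(2(c₀ + γ₀)), and κ := K₀ + κ₀ −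 (D₀ + ε₀)²/(4(c₀ + γ₀)) satisfy, for all t ∈ I: δ' + (c + 4aα)δ = f + 2αg, ε' = (g − 2aδ)β, and κ' = gδ − aδ². -/
/-- Nonlinear superposition principle for the inhomogeneous part of the Riccati system. -/
theorem stmt_10
    (I : Set ℝ) (hIopen : IsOpen I) (hIconn : I.OrdConnected)
    (a b c f g : ℝ → ℝ) (α₀ β₀ γ₀ δ₀ ε₀ κ₀ : ℝ → ℝ)
    (hα₀ : ∀ t ∈ I, DifferentiableAt ℝ α₀ t)
    (hβ₀ : ∀ t ∈ I, DifferentiableAt ℝ β₀ t)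
    (hγ₀ : ∀ t ∈ I, DifferentiableAt ℝ γ₀ t)
    (hδ₀ : ∀ t ∈ I, DifferentiableAt ℝ δ₀ t)
    (hε₀ : ∀ t ∈ I, DifferentiableAt ℝ ε₀ t)
    (hκ₀ : ∀ t ∈ I, DifferentiableAt ℝ κ₀ t)
    (e1 : ∀ t ∈ I, deriv α₀ t + b t + 2 * c t * α₀ t + 4 * a t * α₀ t ^ 2 = 0)
    (e2 : ∀ t ∈ I, deriv β₀ t + (c t + 4 * a t * α₀ t) * β₀ t = 0)
    (e3 : ∀ t ∈ I, deriv γ₀ t + a t * β₀ t ^ 2 = 0)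
    (e4 : ∀ t ∈ I, deriv δ₀ t + (c t + 4 * a t * α₀ t) * δ₀ t = f t + 2 * α₀ t * g t)
    (e5 : ∀ t ∈ I, deriv ε₀ t = (g t - 2 * a t * δ₀ t) * β₀ t)
    (e6 : ∀ t ∈ I, deriv κ₀ t = g t * δ₀ t - a t * δ₀ t ^ 2)
    (c₀ B₀ D₀ E₀ K₀ : ℝ) (hne : ∀ t ∈ I, c₀ + γ₀ t ≠ 0)
    (α β δ ε κ : ℝ → ℝ)
    (hα : ∀ t, α t = α₀ t - β₀ t ^ 2 / (4 * (c₀ + γ₀ t)))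
    (hβ : ∀ t, β t = -(B₀ * β₀ t) / (2 * (c₀ + γ₀ t)))
    (hδ : ∀ t, δ t = δ₀ t - β₀ t * (D₀ + ε₀ t) / (2 * (c₀ + γ₀ t)))
    (hε : ∀ t, ε t = E₀ - B₀ * (D₀ + ε₀ t) / (2 * (c₀ + γ₀ t)))
    (hκ : ∀ t, κ t = K₀ + κ₀ t - (D₀ + ε₀ t) ^ 2 / (4 * (c₀ + γ₀ t))) :
    ∀ t ∈ I,
      deriv δ t + (c t + 4 * a t * α t) * δ t = f t + 2 * α t * g t ∧
      deriv ε t = (g t - 2 * a t * δ t) * β t ∧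
      deriv κ t = g t * δ t - a t * δ t ^ 2 := by
  intro t ht
  have hS := hne t ht
  have h2 : 2 * (c₀ + γ₀ t) ≠ 0 := mul_ne_zero two_ne_zero hS
  have h4 : 4 * (c₀ + γ₀ t) ≠ 0 := mul_ne_zero four_ne_zero hS
  have dβ := (hβ₀ t ht).hasDerivAt
  have dS := (hγ₀ t ht).hasDerivAt.const_add c₀
  have dδ := (hδ₀ t ht).hasDerivAt
  have dN := (hε₀ t ht).hasDerivAt.const_add D₀
  have dκ := (hκ₀ t ht).hasDerivAt
  have Eβ : deriv β₀ t = -((c t + 4 * a t * α₀ t) * β₀ t) := by linarith [e2 t ht]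
  have Eγ : deriv γ₀ t = -(a t * β₀ t ^ 2) := by linarith [e3 t ht]
  have Eδ : deriv δ₀ t = f t + 2 * α₀ t * g t - (c t + 4 * a t * α₀ t) * δ₀ t := by
    linarith [e4 t ht]
  rw [Eβ] at dβ
  rw [Eγ] at dS
  rw [Eδ] at dδ
  rw [e5 t ht] at dN
  rw [e6 t ht] at dκ
  have Dδ := (dδ.fun_sub ((dβ.fun_mul dN).fun_div (dS.const_mul 2) h2)).deriv
  have Dε := (((dN.const_mul B₀).fun_div (dS.const_mul 2) h2).const_sub E₀).deriv
  have Dκ := ((dκ.const_add K₀).fun_sub ((dN.fun_pow 2).fun_div (dS.const_mul 4) h4)).deriv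
  rw [funext hδ, funext hε, funext hκ]
  rw [Dδ, Dε, Dκ, hα, hβ]
  refine ⟨?_, ?_, ?_⟩
  · field_simp
    ring
  · field_simp
    ring
  · field_simp
    norm_num
    ring
end

section
/- Let I ⊆ ℝ be an open interval, let a, b, c, d : ℝ → ℝ with a(t) ≠ 0 on I and a, d differentiable, and let μ₀, γ₀ : ℝ → ℝ be differentiable on I with μ₀(t) ≠ 0 on I. Suppose that α₀ := μ₀'/(4aμ₀) − d/(2a) satisfies α₀' + b + 2cα₀ + 4aα₀² = 0 on I, that β₀ : I → ℝ is differentiable with β₀' + (c + 4aα₀)β₀ = 0 and γ₀' + a·β₀² = 0 on I, and let c₀, M₀ ∈ ℝ with c₀ + γ₀(t) ≠ 0 on I. Define α := α₀ − β₀²/(4(c₀ + γ₀)) and μ := 2M₀·μ₀·(c₀ + γ₀). Then μ'(t) = (4a(t)α(t) + 2d(t))·μ(t) for all t ∈ I. -/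
/-- Verification of the formula μ = 2μ(0)μ₀(t)(α(0) + γ₀(t)): the built μ satisfies
μ' = (4aα + 2d)μ. -/
theorem stmt_11
    (I : Set ℝ) (hIopen : IsOpen I) (hIconn : I.OrdConnected)
    (a b c d : ℝ → ℝ)
    (ha : ∀ t ∈ I, DifferentiableAt ℝ a t) (hdd : ∀ t ∈ I, DifferentiableAt ℝ d t)
    (hane : ∀ t ∈ I, a t ≠ 0)
    (μ₀ γ₀ : ℝ → ℝ)
    (hμ₀ : ∀ t ∈ I, DifferentiableAt ℝ μ₀ t)
    (hγ₀ : ∀ t ∈ I, DifferentiableAt ℝ γ₀ t)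
    (hμ₀ne : ∀ t ∈ I, μ₀ t ≠ 0)
    (α₀ : ℝ → ℝ)
    (hα₀def : ∀ t, α₀ t = deriv μ₀ t / (4 * a t * μ₀ t) - d t / (2 * a t))
    (hα₀ric : ∀ t ∈ I, deriv α₀ t + b t + 2 * c t * α₀ t + 4 * a t * α₀ t ^ 2 = 0)
    (β₀ : ℝ → ℝ)
    (hβ₀diff : ∀ t ∈ I, DifferentiableAt ℝ β₀ t)
    (hβ₀ : ∀ t ∈ I, deriv β₀ t + (c t + 4 * a t * α₀ t) * β₀ t = 0)
    (hγ₀ode : ∀ t ∈ I, deriv γ₀ t + a t * β₀ t ^ 2 = 0)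
    (c₀ M₀ : ℝ) (hne : ∀ t ∈ I, c₀ + γ₀ t ≠ 0)
    (α μ : ℝ → ℝ)
    (hα : ∀ t, α t = α₀ t - β₀ t ^ 2 / (4 * (c₀ + γ₀ t)))
    (hμ : ∀ t, μ t = 2 * M₀ * μ₀ t * (c₀ + γ₀ t)) :
    ∀ t ∈ I, deriv μ t = (4 * a t * α t + 2 * d t) * μ t := by
  intro t ht
  have hA := hane t ht
  have hM := hμ₀ne t ht
  have hN := hne t ht
  have hg : deriv γ₀ t = -(a t * β₀ t ^ 2) := by linarith [hγ₀ode t ht]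
  have hfun : μ = fun t => 2 * M₀ * μ₀ t * (c₀ + γ₀ t) := funext hμ
  have hd : HasDerivAt μ (2 * M₀ * deriv μ₀ t * (c₀ + γ₀ t) + 2 * M₀ * μ₀ t * deriv γ₀ t) t := by
    rw [hfun]
    exact ((hμ₀ t ht).hasDerivAt.const_mul (2 * M₀)).mul ((hγ₀ t ht).hasDerivAt.const_add c₀)
  rw [hd.deriv, hg, hα, hα₀def, hμ]
  field_simp
  ring
end

section
/- Let s > 0, let h : ℝ → ℝ be continuous, and let α₀, β₀, g₀, δ₀, e₀, k₀ ∈ ℝ and μ₀ > 0 with α₀ ≠ 0. On the interval I = {t : 1 + 2α₀t > 0}, define α(t) = α₀/(1 + 2α₀t), β(t) = β₀/(1 + 2α₀t), γ(t) = g₀ − β₀²t/(2(1 + 2α₀t)), δ(t) = δ₀/(1 + 2α₀t), ε(t) = e₀ − β₀δ₀t/(1 + 2α₀t), κ(t) = k₀ − δ₀²t/(2(1 + 2α₀t)) − (2/μ₀^s)·∫₀ᵗ h(r)/(1 + 2α₀r)^s dr, μ(t) = μ₀(1 + 2α₀t). Then on I these functions satisfy the modified Riccati system with a = 1/2 and b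 = c = d = f = g = 0: α' + 2α² = 0, β' + 2αβ = 0, γ' + β²/2 = 0, δ' + 2αδ = 0, ε' = −βδ, κ' = −δ²/2 − 2h/μ^s, and μ' = 2αμ. Moreover, if α₀ < 0, then with T_b = −1/(2α₀) > 0 one has μ(t) > 0 for t ∈ [0, T_b) and μ(t) → 0 as t → T_b from the left, so that μ(t)^{−1/2} → +∞ as t → T_b from the left. -/
open Filter Topology

/-- Explicit blow-up example for the free coupled NLS system: the multiparameter solution
of the modified Riccati system with a = 1/2, b = c = d = f = g = 0, and its finite-time
blow-up at T_b = −1/(2α₀) when α₀ < 0. -/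
theorem stmt_15
    (s : ℝ) (hs : 0 < s)
    (h : ℝ → ℝ) (hh : Continuous h)
    (α₀ β₀ g₀ δ₀ e₀ k₀ μ₀ : ℝ) (hμ₀ : 0 < μ₀) (hα₀ : α₀ ≠ 0)
    (I : Set ℝ) (hI : I = {t : ℝ | 0 < 1 + 2 * α₀ * t})
    (α β γ δ ε κ μ : ℝ → ℝ)
    (hα : ∀ t, α t = α₀ / (1 + 2 * α₀ * t))
    (hβ : ∀ t, β t = β₀ / (1 + 2 * α₀ * t))
    (hγ : ∀ t, γ t = g₀ - β₀ ^ 2 * t / (2 * (1 + 2 * α₀ * t)))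
    (hδ : ∀ t, δ t = δ₀ / (1 + 2 * α₀ * t))
    (hε : ∀ t, ε t = e₀ - β₀ * δ₀ * t / (1 + 2 * α₀ * t))
    (hκ : ∀ t, κ t = k₀ - δ₀ ^ 2 * t / (2 * (1 + 2 * α₀ * t))
        - (2 / μ₀ ^ s) * ∫ r in (0:ℝ)..t, h r / (1 + 2 * α₀ * r) ^ s)
    (hμ : ∀ t, μ t = μ₀ * (1 + 2 * α₀ * t)) :
    (∀ t ∈ I,
      deriv α t + 2 * α t ^ 2 = 0 ∧
      deriv β t + 2 * α t * β t = 0 ∧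
      deriv γ t + β t ^ 2 / 2 = 0 ∧
      deriv δ t + 2 * α t * δ t = 0 ∧
      deriv ε t = -(β t * δ t) ∧
      deriv κ t = -(δ t ^ 2) / 2 - 2 * h t / μ t ^ s ∧
      deriv μ t = 2 * α t * μ t) ∧
    (α₀ < 0 →
      0 < -(1 / (2 * α₀)) ∧
      (∀ t ∈ Set.Ico (0 : ℝ) (-(1 / (2 * α₀))), 0 < μ t) ∧
      Tendsto μ (𝓝[<] (-(1 / (2 * α₀)))) (𝓝 0) ∧
      Tendsto (fun t => (Real.sqrt (μ t))⁻¹) (𝓝[<] (-(1 / (2 * α₀)))) atTop) := by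
  have hlin : ∀ t : ℝ, HasDerivAt (fun t : ℝ => 1 + 2 * α₀ * t) (2 * α₀) t := by
    intro t
    simpa using ((hasDerivAt_id t).const_mul (2 * α₀)).const_add 1
  have hconst : ∀ (p t : ℝ), 0 < 1 + 2 * α₀ * t →
      HasDerivAt (fun t : ℝ => p / (1 + 2 * α₀ * t))
        (-(p * (2 * α₀)) / (1 + 2 * α₀ * t) ^ 2) t := by
    intro p t ht
    simpa using (hasDerivAt_const t p).fun_div (hlin t) ht.ne'
  have hfrac : ∀ (p t : ℝ), 0 < 1 + 2 * α₀ * t →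
      HasDerivAt (fun t : ℝ => p * t / (1 + 2 * α₀ * t))
        (p / (1 + 2 * α₀ * t) ^ 2) t := by
    intro p t ht
    have h1 : HasDerivAt (fun t : ℝ => p * t) p t := by
      simpa using (hasDerivAt_id t).const_mul p
    refine (h1.fun_div (hlin t) ht.ne').congr_deriv ?_
    congr 1
    ring
  have hfrac2 : ∀ (p t : ℝ), 0 < 1 + 2 * α₀ * t →
      HasDerivAt (fun t : ℝ => p * t / (2 * (1 + 2 * α₀ * t)))
        (p / 2 / (1 + 2 * α₀ * t) ^ 2) t := by
    intro p t ht
    have := hfrac (p / 2) t ht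
    have e : (fun t : ℝ => p * t / (2 * (1 + 2 * α₀ * t)))
        = fun t : ℝ => p / 2 * t / (1 + 2 * α₀ * t) := by
      funext x
      rw [← div_div]
      congr 1
      ring
    rw [e]
    exact this
  have hcontlin : Continuous (fun t : ℝ => 1 + 2 * α₀ * t) := by fun_prop
  have hopen : IsOpen {t : ℝ | 0 < 1 + 2 * α₀ * t} := isOpen_lt continuous_const hcontlin
  have hcont : ContinuousOn (fun r : ℝ => h r / (1 + 2 * α₀ * r) ^ s)
      {t : ℝ | 0 < 1 + 2 * α₀ * t} := by
    apply ContinuousOn.div hh.continuousOn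
    · exact hcontlin.continuousOn.rpow_const (fun x hx => Or.inl (ne_of_gt hx))
    · intro x hx
      exact (Real.rpow_pos_of_pos hx s).ne'
  have hint : ∀ t : ℝ, 0 < 1 + 2 * α₀ * t →
      HasDerivAt (fun t : ℝ => ∫ r in (0:ℝ)..t, h r / (1 + 2 * α₀ * r) ^ s)
        (h t / (1 + 2 * α₀ * t) ^ s) t := by
    intro t ht
    have hsub : Set.uIcc 0 t ⊆ {t : ℝ | 0 < 1 + 2 * α₀ * t} := by
      intro x hx
      show 0 < 1 + 2 * α₀ * x
      rcases Set.mem_uIcc.1 hx with ⟨h1, h2⟩ | ⟨h1, h2⟩ <;>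
      rcases le_total 0 α₀ with h3 | h3 <;> nlinarith
    apply intervalIntegral.integral_hasDerivAt_right
    · exact (hcont.mono hsub).intervalIntegrable
    · exact hcont.stronglyMeasurableAtFilter hopen t ht
    · exact hcont.continuousAt (hopen.mem_nhds ht)
  have eα := funext hα
  have eβ := funext hβ
  have eγ := funext hγ
  have eδ := funext hδ
  have eε := funext hε
  have eκ := funext hκ
  have eμ := funext hμ
  constructor
  · intro t ht
    rw [hI] at ht
    have ht : 0 < 1 + 2 * α₀ * t := ht
    have dα := (congrArg (fun F : ℝ → ℝ => deriv F t) eα).trans <| (hconst α₀ t ht).deriv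
    have dβ := (congrArg (fun F : ℝ → ℝ => deriv F t) eβ).trans <| (hconst β₀ t ht).deriv
    have dδ := (congrArg (fun F : ℝ → ℝ => deriv F t) eδ).trans <| (hconst δ₀ t ht).deriv
    have dγ := (congrArg (fun F : ℝ → ℝ => deriv F t) eγ).trans <| ((hfrac2 (β₀ ^ 2) t ht).const_sub g₀).deriv
    have dε := (congrArg (fun F : ℝ → ℝ => deriv F t) eε).trans <| ((hfrac (β₀ * δ₀) t ht).const_sub e₀).deriv
    have dκ := (congrArg (fun F : ℝ → ℝ => deriv F t) eκ).trans <| (((hfrac2 (δ₀ ^ 2) t ht).const_sub k₀).fun_sub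
        ((hint t ht).const_mul (2 / μ₀ ^ s))).deriv
    have dμ := (congrArg (fun F : ℝ → ℝ => deriv F t) eμ).trans <| ((hlin t).const_mul μ₀).deriv
    beta_reduce at dα dβ dγ dδ dε dκ dμ
    rw [dα, dβ, dγ, dδ, dε, dκ, dμ, hα, hβ, hδ, hμ, Real.mul_rpow hμ₀.le ht.le]
    have p1 := (Real.rpow_pos_of_pos hμ₀ s).ne'
    have p2 := (Real.rpow_pos_of_pos ht s).ne'
    generalize (1 + 2 * α₀ * t) ^ s = y at *
    generalize μ₀ ^ s = z at *
    have ht' := ht.ne'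
    generalize 1 + 2 * α₀ * t = w at *
    refine ⟨?_, ?_, ?_, ?_, ?_, ?_, ?_⟩ <;> field_simp <;> ring
  · intro hneg
    have hT : 1 + 2 * α₀ * (-(1 / (2 * α₀))) = 0 := by field_simp; ring
    have hpos : ∀ t, t < -(1 / (2 * α₀)) → 0 < μ t := by
      intro t ht
      rw [hμ]
      apply mul_pos hμ₀
      nlinarith
    have hlim : Tendsto μ (𝓝[<] (-(1 / (2 * α₀)))) (𝓝 0) := by
      have hc : Continuous μ := by rw [eμ]; fun_prop
      have := hc.tendsto (-(1 / (2 * α₀)))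
      rw [hμ, hT, mul_zero] at this
      exact this.mono_left nhdsWithin_le_nhds
    refine ⟨?_, fun t ht => hpos t ht.2, hlim, ?_⟩
    · have : 1 / (2 * α₀) < 0 := one_div_neg.2 (by linarith)
      linarith
    · apply Tendsto.inv_tendsto_nhdsGT_zero
      rw [tendsto_nhdsWithin_iff]
      constructor
      · simpa using hlim.sqrt
      · filter_upwards [self_mem_nhdsWithin] with t ht
        exact Real.sqrt_pos.2 (hpos t ht)
end

section
/- Define on ℝ the functions α(t) = t/4, β(t) = e^{−t²}, γ(t) = −∫₀ᵗ 2e^{−2r²} dr, δ(t) = e^{−t²}, ε(t) = −∫₀ᵗ 4e^{−2r²} dr, κ(t) = −∫₀ᵗ 2e^{−2r²} dr, μ(t) = e^{3t²}. Then with n = 3, a = 2, and b(t) = −(1 + 2t²)/4, these functions satisfy for all t ∈ ℝ the n-dimensional Riccati system: α' + b + 4aα² = 0, β' + 4aαβ = 0, γ' + a·β² = 0, δ' + 4aαδ = 0, ε' + 2aβδ = 0, κ' + a·δ² = 0, and μ' = 4n·a·α·μ; moreover μ(t) > 0 and the integrability condition h(t) = λ·a(t)·β(t)²·μ(t) holds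 with λ = −6 and h(t) = −12e^{t²}. -/
/-- Verification of the n-dimensional Riccati-system data for the three-dimensional
coupled NLS example with n = 3, a = 2, b = −(1 + 2t²)/4, λ = −6, h = −12e^{t²}. -/
theorem stmt_17
    (n : ℕ) (hn : n = 3)
    (lam : ℝ) (hlam : lam = -6)
    (a b h : ℝ → ℝ)
    (ha : ∀ t, a t = 2) (hb : ∀ t, b t = -(1 + 2 * t ^ 2) / 4)
    (hh : ∀ t, h t = -12 * Real.exp (t ^ 2))
    (α β γ δ ε κ μ : ℝ → ℝ)
    (hα : ∀ t, α t = t / 4)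
    (hβ : ∀ t, β t = Real.exp (-t ^ 2))
    (hγ : ∀ t, γ t = -∫ r in (0:ℝ)..t, 2 * Real.exp (-2 * r ^ 2))
    (hδ : ∀ t, δ t = Real.exp (-t ^ 2))
    (hε : ∀ t, ε t = -∫ r in (0:ℝ)..t, 4 * Real.exp (-2 * r ^ 2))
    (hκ : ∀ t, κ t = -∫ r in (0:ℝ)..t, 2 * Real.exp (-2 * r ^ 2))
    (hμ : ∀ t, μ t = Real.exp (3 * t ^ 2)) :
    ∀ t : ℝ,
      deriv α t + b t + 4 * a t * α t ^ 2 = 0 ∧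
      deriv β t + 4 * a t * α t * β t = 0 ∧
      deriv γ t + a t * β t ^ 2 = 0 ∧
      deriv δ t + 4 * a t * α t * δ t = 0 ∧
      deriv ε t + 2 * a t * β t * δ t = 0 ∧
      deriv κ t + a t * δ t ^ 2 = 0 ∧
      deriv μ t = 4 * n * a t * α t * μ t ∧
      0 < μ t ∧
      h t = lam * a t * β t ^ 2 * μ t := by
  have hsq : ∀ t : ℝ, Real.exp (-2 * t ^ 2) = Real.exp (-t ^ 2) * Real.exp (-t ^ 2) := by
    intro t
    rw [← Real.exp_add]
    congr 1
    ring
  have hint : ∀ c t : ℝ, HasDerivAt (fun t : ℝ => -∫ r in (0:ℝ)..t, c * Real.exp (-2 * r ^ 2))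
      (-(c * Real.exp (-2 * t ^ 2))) t := by
    intro c t
    have hc : Continuous (fun r : ℝ => c * Real.exp (-2 * r ^ 2)) := by fun_prop
    exact (hc.integral_hasStrictDerivAt 0 t).hasDerivAt.neg
  have hexp : ∀ c t : ℝ, HasDerivAt (fun t : ℝ => Real.exp (c * t ^ 2))
      (Real.exp (c * t ^ 2) * (c * (2 * t))) t := by
    intro c t
    have h1 := ((hasDerivAt_pow 2 t).const_mul c).exp
    simpa using h1
  have hgauss : ∀ t : ℝ, deriv (fun t : ℝ => Real.exp (-t ^ 2)) t
      = -2 * t * Real.exp (-t ^ 2) := by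
    intro t
    have h1 := (hexp (-1) t).deriv
    simp only [neg_one_mul] at h1
    rw [h1]
    ring
  obtain rfl : α = _ := funext hα
  obtain rfl : β = _ := funext hβ
  obtain rfl : γ = _ := funext hγ
  obtain rfl : δ = _ := funext hδ
  obtain rfl : ε = _ := funext hε
  obtain rfl : κ = _ := funext hκ
  obtain rfl : μ = _ := funext hμ
  subst hn hlam
  intro t
  have hα' : deriv (fun t : ℝ => t / 4) t = 1 / 4 := ((hasDerivAt_id t).div_const 4).deriv
  rw [hα', hgauss, (hint 2 t).deriv, (hint 4 t).deriv, (hexp 3 t).deriv, ha, hb, hh, hsq]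
  refine ⟨by ring, by ring, by ring, by ring, by ring, by ring, by push_cast; ring,
    Real.exp_pos _, ?_⟩
  have h2 : Real.exp (t ^ 2) = Real.exp (-t ^ 2) ^ 2 * Real.exp (3 * t ^ 2) := by
    rw [sq (Real.exp _), ← Real.exp_add, ← Real.exp_add]
    congr 1
    ring
  rw [h2]
  ring
end
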